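/- arXiv:dg-ga/9711015 — 7 statements merged into one kernel-verified Lean document; each statement's English description precedes it below -/
import Mathlib

section
/- For a sequence of diagonal matrices D_n = diag(d_n^1, …, d_n^d) with strictly positive entries, approximate stability coincides with stability: AS(0,(D_n)) = {v ∈ ℝ^d : sup_n ‖D_n v‖ < ∞}. -/
open Filter

/-- A vector `v` is approximately stable for the sequence of linear maps `(A n)`
if it is the limit of a sequence `(u n)` whose image sequence `(A n (u n))` is bounded. -/
def ApproxStable {d : ℕ} (A : ℕ → Matrix (Fin d) (Fin d) ℝ) (v : Fin d → ℝ) : Prop :=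
  ∃ u : ℕ → Fin d → ℝ, Tendsto u atTop (nhds v) ∧ ∃ C : ℝ, ∀ n, ‖(A n).mulVec (u n)‖ ≤ C

open Asymptotics Topology

theorem isBigO_const_of_tendsto {α E : Type*} [NormedAddCommGroup E] {l : Filter α}
    {u : α → E} {v : E} (hu : Tendsto u l (𝓝 v)) : (fun _ => v) =O[l] u := by
  rcases eq_or_ne v 0 with rfl | hv
  · exact isBigO_zero u l
  · exact ((isEquivalent_const_iff_tendsto hv).2 hu).isBigO_symm

-- A norm bound `v = O(u)` need not survive applying matrices that vary with `x`. Diagonal matrices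
-- act on each coordinate separately, and there it does, the norm being multiplicative.
theorem isBigO_diagonal_mulVec_const_of_tendsto {α ι R : Type*} [Fintype ι] [DecidableEq ι]
    [NormedRing R] [NormMulClass R] {l : Filter α} (a : α → ι → R) {u : α → ι → R} {v : ι → R}
    (hu : Tendsto u l (𝓝 v)) :
    (fun x => (Matrix.diagonal (a x)).mulVec v) =O[l]
      fun x => (Matrix.diagonal (a x)).mulVec (u x) := by
  refine isBigO_pi.2 fun i => ?_
  have hcoord : (fun x => a x i * v i) =O[l] fun x => a x i * u x i :=
    (isBigO_refl _ l).mul (isBigO_const_of_tendsto (tendsto_pi_nhds.1 hu i))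
  simp only [← Matrix.mulVec_diagonal] at hcoord
  exact hcoord.trans (isBigO_pi.1 (isBigO_refl _ l) i)

theorem approxStable_of_forall_norm_mulVec_le {d : ℕ} {A : ℕ → Matrix (Fin d) (Fin d) ℝ}
    {v : Fin d → ℝ} {C : ℝ} (hC : ∀ n, ‖(A n).mulVec v‖ ≤ C) : ApproxStable A v :=
  ⟨fun _ => v, tendsto_const_nhds, C, hC⟩

theorem approxStable_diagonal_eq_stable_general {d : ℕ} (dd : ℕ → Fin d → ℝ) :
    {v | ApproxStable (fun n => Matrix.diagonal (dd n)) v} =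
      {v : Fin d → ℝ | ∃ C : ℝ, ∀ n, ‖(Matrix.diagonal (dd n)).mulVec v‖ ≤ C} := by
  ext v
  constructor
  · rintro ⟨u, hu, hbdd⟩
    exact isBigO_one_nat_atTop_iff.1 <|
      (isBigO_diagonal_mulVec_const_of_tendsto dd hu).trans (isBigO_one_nat_atTop_iff.2 hbdd)
  · rintro ⟨C, hC⟩
    exact approxStable_of_forall_norm_mulVec_le hC

/-- For a sequence of diagonal matrices with strictly positive entries, approximate
stability coincides with stability. -/
theorem approxStable_diagonal_eq_stable {d : ℕ} (dd : ℕ → Fin d → ℝ)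
    (hpos : ∀ n i, 0 < dd n i) :
    {v | ApproxStable (fun n => Matrix.diagonal (dd n)) v} =
      {v : Fin d → ℝ | ∃ C : ℝ, ∀ n, ‖(Matrix.diagonal (dd n)).mulVec v‖ ≤ C} :=
  approxStable_diagonal_eq_stable_general dd
end

section
/- Let d ≥ 3 and let A be a real d×d matrix with det A = 1 that preserves the standard Lorentz quadratic form q(x) = −x₁² + x₂² + ⋯ + x_d². Then A can be written as A = L·D·R, where L and R belong to SO(d) (real special orthogonal matrices) and D = diag(λ, 1, …, 1, λ⁻¹) for some real number λ with 0 < λ ≤ 1. -/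
open Matrix

/-- The standard Lorentz quadratic form `q(x) = -x₁² + x₂² + ⋯ + x_d²` on `ℝ^d`. -/
def lorentzQ {d : ℕ} (x : Fin d → ℝ) : ℝ :=
  ∑ i : Fin d, (if (i : ℕ) = 0 then (-1 : ℝ) else 1) * x i ^ 2

/-!
Write `e` for the timelike basis vector, `η = 1 - 2 e eᵀ` and `r = Aᵀ e`. From `Aᵀ η A = η` one
gets `Aᵀ A = 1 + 2 (r rᵀ - e eᵀ)`, a perturbation of the identity inside the span of `e` and `r`.
With `r = a e + s u`, where `u` is a unit vector orthogonal to `e`, one has `a² - s² = 1`, and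
`(e - u) / √2`, `(e + u) / √2` are eigenvectors of `Aᵀ A` with the mutually inverse eigenvalues
`(a - s)²` and `(a + s)²`. Completing them to an orthonormal basis yields a singular value
decomposition of `A` with singular values `|a - s|`, `|a + s|` and `1`. A reflection in a
coordinate hyperplane commutes with the diagonal factor, so it can be moved from the right
orthogonal factor to the left one, which makes the right factor a rotation.
-/

section OrthogonalMatrices

variable {ι : Type*} [Fintype ι] [DecidableEq ι]

lemma exists_mem_orthogonalGroup_col_eq {s : Set ι} {v : ι → EuclideanSpace ℝ ι}
    (hv : Orthonormal ℝ (s.domRestrict v)) :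
    ∃ Q ∈ orthogonalGroup ι ℝ, ∀ i ∈ s, Q.col i = v i := by
  obtain ⟨b, hb⟩ := hv.exists_orthonormalBasis_extension_of_card_eq (by simp)
  refine ⟨(EuclideanSpace.basisFun ι ℝ).toBasis.toMatrix b,
    (EuclideanSpace.basisFun ι ℝ).toMatrix_orthonormalBasis_mem_orthogonal b, fun i hi ↦ ?_⟩
  ext j
  simp [Module.Basis.toMatrix_apply, hb i hi]

lemma exists_mem_orthogonalGroup_col_eq_pair {o p : ι} (hop : o ≠ p) {f g : EuclideanSpace ℝ ι}
    (hf : ‖f‖ = 1) (hg : ‖g‖ = 1) (hfg : inner ℝ f g = 0) :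
    ∃ Q ∈ orthogonalGroup ι ℝ, Q.col o = f ∧ Q.col p = g := by
  have hv : Orthonormal ℝ (({o, p} : Set ι).domRestrict fun i ↦ if i = o then f else g) := by
    constructor
    · rintro ⟨i, rfl | rfl⟩ <;> simp [hf, hg, hop.symm]
    · rintro ⟨i, rfl | rfl⟩ ⟨j, rfl | rfl⟩ hij <;>
        simp_all [hop.symm, real_inner_comm]
  obtain ⟨Q, hQ, hcol⟩ := exists_mem_orthogonalGroup_col_eq hv
  exact ⟨Q, hQ, by simpa using hcol o (by simp), by simpa [hop.symm] using hcol p (by simp)⟩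

lemma exists_mem_orthogonalGroup_eq_mul_diagonal_mul {A Q : Matrix ι ι ℝ} {w : ι → ℝ}
    (hw : ∀ i, w i ≠ 0) (hQ : Q ∈ orthogonalGroup ι ℝ)
    (hA : Aᵀ * A = Q * diagonal (w ^ 2) * Qᵀ) :
    ∃ L ∈ orthogonalGroup ι ℝ, A = L * diagonal w * Qᵀ := by
  have hQQ : Qᵀ * Q = 1 := (mem_orthogonalGroup_iff' ι ℝ).mp hQ
  have hwinv : diagonal w⁻¹ * diagonal w = 1 := by
    simp [diagonal_mul_diagonal, hw]
  refine ⟨A * Q * diagonal w⁻¹, (mem_orthogonalGroup_iff' ι ℝ).mpr ?_, ?_⟩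
  · calc (A * Q * diagonal w⁻¹)ᵀ * (A * Q * diagonal w⁻¹)
        = diagonal w⁻¹ * (Qᵀ * (Aᵀ * A) * Q) * diagonal w⁻¹ := by
          simp only [transpose_mul, diagonal_transpose, Matrix.mul_assoc]
      _ = diagonal w⁻¹ * ((Qᵀ * Q) * diagonal (w ^ 2) * (Qᵀ * Q)) * diagonal w⁻¹ := by
          simp only [hA, Matrix.mul_assoc]
      _ = 1 := by simp [hQQ, diagonal_mul_diagonal, sq, hw]
  · rw [Matrix.mul_assoc (A * Q), hwinv, Matrix.mul_one, Matrix.mul_assoc,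
      (mem_orthogonalGroup_iff ι ℝ).mp hQ, Matrix.mul_one]

lemma exists_mem_specialOrthogonalGroup_mul_diagonal_mul_eq [Nonempty ι] {L R : Matrix ι ι ℝ}
    (hL : L ∈ orthogonalGroup ι ℝ) (hR : R ∈ orthogonalGroup ι ℝ) (w : ι → ℝ) :
    ∃ L' ∈ orthogonalGroup ι ℝ, ∃ R' ∈ specialOrthogonalGroup ι ℝ,
      L * diagonal w * R = L' * diagonal w * R' := by
  obtain ⟨o⟩ := ‹Nonempty ι›
  have hdet : R.det * R.det = 1 := by
    simpa using congrArg det ((mem_orthogonalGroup_iff ι ℝ).mp hR)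
  set E : Matrix ι ι ℝ := diagonal (Function.update 1 o R.det) with hE
  have hEE : E * E = 1 := by
    rw [hE, diagonal_mul_diagonal, ← diagonal_one]
    congr 1
    ext i
    obtain rfl | hi := eq_or_ne i o <;> simp [*]
  have hEmem : E ∈ orthogonalGroup ι ℝ := by
    rw [mem_orthogonalGroup_iff]
    simpa [hE, star_eq_conjTranspose] using hEE
  have hEdet : E.det = R.det := by
    simp [hE, det_diagonal, Finset.prod_update_of_mem]
  refine ⟨L * E, mul_mem hL hEmem, E * R,
    mem_specialOrthogonalGroup_iff.mpr ⟨mul_mem hEmem hR, by rw [det_mul, hEdet, hdet]⟩, ?_⟩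
  have hcomm : E * diagonal w = diagonal w * E := by
    simp only [hE, diagonal_mul_diagonal, mul_comm]
  calc L * diagonal w * R = L * (diagonal w * (E * E)) * R := by rw [hEE, Matrix.mul_one]
    _ = L * (E * diagonal w * E) * R := by rw [hcomm, Matrix.mul_assoc (diagonal w)]
    _ = L * E * diagonal w * (E * R) := by simp only [Matrix.mul_assoc]

end OrthogonalMatrices

section UnitVectors

variable {E : Type*} [NormedAddCommGroup E] [InnerProductSpace ℝ E]

lemma exists_norm_eq_one_smul_eq_of_inner_eq_zero {e v x : E} (hv : v ≠ 0)
    (hev : inner ℝ e v = 0) (hex : inner ℝ e x = 0) :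
    ∃ (u : E) (s : ℝ), ‖u‖ = 1 ∧ inner ℝ e u = 0 ∧ s • u = x := by
  obtain rfl | hx := eq_or_ne x 0
  · exact ⟨‖v‖⁻¹ • v, 0, norm_smul_inv_norm hv, by simp [inner_smul_right, hev], by simp⟩
  · exact ⟨‖x‖⁻¹ • x, ‖x‖, norm_smul_inv_norm hx, by simp [inner_smul_right, hex],
      by simp [smul_smul, hx]⟩

lemma exists_norm_eq_one_eq_inner_smul_add_smul {e v : E} (he : ‖e‖ = 1) (hv : v ≠ 0)
    (hev : inner ℝ e v = 0) (r : E) :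
    ∃ (u : E) (s : ℝ), ‖u‖ = 1 ∧ inner ℝ e u = 0 ∧ 0 ≤ inner ℝ e r * s ∧
      r = inner ℝ e r • e + s • u := by
  have horth : inner ℝ e (r - inner ℝ e r • e) = 0 := by
    simp [inner_sub_right, inner_smul_right, he]
  obtain ⟨u, s, hu, heu, hs⟩ := exists_norm_eq_one_smul_eq_of_inner_eq_zero hv hev horth
  obtain hnonneg | hnonpos := le_total 0 (inner ℝ e r * s)
  · exact ⟨u, s, hu, heu, hnonneg, by simp [hs]⟩
  · exact ⟨-u, -s, by simpa, by simpa, by simpa using hnonpos, by simp [hs]⟩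

lemma norm_inv_sqrt_two_smul_sub {e u : E} (he : ‖e‖ = 1) (hu : ‖u‖ = 1)
    (heu : inner ℝ e u = 0) : ‖(√2)⁻¹ • (e - u)‖ = 1 := by
  have hnorm : ‖e - u‖ = √2 := by
    rw [norm_sub_eq_sqrt_iff_real_inner_eq_zero.mpr heu, he, hu]
    norm_num
  rw [norm_smul, hnorm, norm_inv, Real.norm_of_nonneg (Real.sqrt_nonneg 2)]
  simp

lemma norm_inv_sqrt_two_smul_add {e u : E} (he : ‖e‖ = 1) (hu : ‖u‖ = 1)
    (heu : inner ℝ e u = 0) : ‖(√2)⁻¹ • (e + u)‖ = 1 := by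
  simpa using norm_inv_sqrt_two_smul_sub (u := -u) he (by simpa) (by simpa)

end UnitVectors

section QuadraticForms

open QuadraticMap

variable {ι R : Type*} [Fintype ι] [CommRing R] [Invertible (2 : R)]

lemma associated_weightedSumSquares_apply (w x y : ι → R) :
    associated (weightedSumSquares R w) x y = ∑ i, w i * (x i * y i) := by
  rw [associated_apply, Module.End.smul_def, half_moduleEnd_apply_eq_half_smul,
    invOf_smul_eq_iff]
  simp only [weightedSumSquares_apply, ← Finset.sum_sub_distrib, smul_eq_mul, Finset.mul_sum,
    Pi.add_apply]
  exact Finset.sum_congr rfl fun i _ ↦ by ring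

variable [DecidableEq ι]

lemma toMatrix'_weightedSumSquares (w : ι → R) :
    QuadraticForm.toMatrix' (weightedSumSquares R w) = diagonal w := by
  ext i j
  rw [QuadraticForm.toMatrix', LinearMap.toMatrix₂'_apply, associated_weightedSumSquares_apply]
  obtain rfl | hij := eq_or_ne i j
  · simp [Pi.single_apply]
  · simp [Pi.single_apply, hij, hij.symm]

lemma transpose_mul_diagonal_mul_of_weightedSumSquares_mulVec {w : ι → R} {A : Matrix ι ι R}
    (hA : ∀ x, weightedSumSquares R w (A *ᵥ x) = weightedSumSquares R w x) :
    Aᵀ * diagonal w * A = diagonal w := by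
  have hcomp : (weightedSumSquares R w).comp (toLin' A) = weightedSumSquares R w :=
    QuadraticMap.ext hA
  simpa [QuadraticForm.toMatrix'_comp, toMatrix'_weightedSumSquares] using
    congrArg QuadraticForm.toMatrix' hcomp

end QuadraticForms

section Boosts

lemma two_smul_vecMulVec_sub_eq_of_sq_sub_sq {ι : Type*} {a s : ℝ} (has : a ^ 2 - s ^ 2 = 1)
    (e u : ι → ℝ) :
    (2 : ℝ) • (vecMulVec (a • e + s • u) (a • e + s • u) - vecMulVec e e) =
      ((a - s) ^ 2 - 1) • vecMulVec ((√2)⁻¹ • (e - u)) ((√2)⁻¹ • (e - u)) +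
        ((a + s) ^ 2 - 1) • vecMulVec ((√2)⁻¹ • (e + u)) ((√2)⁻¹ • (e + u)) := by
  have hsqrt : (√2)⁻¹ * (√2)⁻¹ = (2⁻¹ : ℝ) := by
    rw [← mul_inv, Real.mul_self_sqrt zero_le_two]
  simp only [smul_vecMulVec, vecMulVec_smul, smul_smul, hsqrt]
  ext i j
  simp only [vecMulVec_apply, Matrix.smul_apply, Matrix.sub_apply, Matrix.add_apply, Pi.add_apply,
    Pi.sub_apply, Pi.smul_apply, smul_eq_mul]
  linear_combination (e i * e j - u i * u j) * has

lemma abs_sub_le_one_of_sq_sub_sq {a s : ℝ} (has : a ^ 2 - s ^ 2 = 1) (hnonneg : 0 ≤ a * s) :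
    |a - s| ≤ 1 := by
  rw [← sq_le_one_iff_abs_le_one]
  nlinarith

variable {ι : Type*} [DecidableEq ι]

/-- The singular values of a boost in a plane of signature `(1, 1)`, listed as `l` at the
coordinate `o`, `l⁻¹` at `p` and `1` elsewhere. -/
noncomputable def boostSingularValues (o p : ι) (l : ℝ) : ι → ℝ :=
  fun i ↦ if i = o then l else if i = p then l⁻¹ else 1

lemma boostSingularValues_ne_zero (o p : ι) {l : ℝ} (hl : l ≠ 0) (i : ι) :
    boostSingularValues o p l i ≠ 0 := by
  unfold boostSingularValues
  split_ifs <;> simp [hl]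

variable {o p : ι}

lemma diagonal_boostSingularValues_sq (hop : o ≠ p) (l : ℝ) :
    diagonal (boostSingularValues o p l ^ 2) =
      1 + ((l ^ 2 - 1) • vecMulVec (Pi.single o 1) (Pi.single o 1) +
        (l⁻¹ ^ 2 - 1) • vecMulVec (Pi.single p 1) (Pi.single p 1)) := by
  ext i j
  obtain rfl | hij := eq_or_ne i j
  · obtain rfl | hio := eq_or_ne i o
    · simp [boostSingularValues, vecMulVec_apply, *]
    · obtain rfl | hip := eq_or_ne i p <;> simp [boostSingularValues, vecMulVec_apply, *]
  · have hsingle (k : ι) : (Pi.single k 1 : ι → ℝ) i * (Pi.single k 1 : ι → ℝ) j = 0 := by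
      grind
    simp [vecMulVec_apply, hsingle, hij]

variable [Fintype ι]

lemma det_diagonal_boostSingularValues (hop : o ≠ p) {l : ℝ} (hl : l ≠ 0) :
    (diagonal (boostSingularValues o p l)).det = 1 := by
  have hprod : ∏ i, boostSingularValues o p l i = ∏ i ∈ {o, p}, boostSingularValues o p l i :=
    (Finset.prod_subset (Finset.subset_univ _) fun i _ hi ↦ by
      simp_all [boostSingularValues]).symm
  rw [det_diagonal, hprod, Finset.prod_pair hop]
  simp [boostSingularValues, hop.symm, hl]

lemma mul_diagonal_boostSingularValues_sq_mul_transpose (hop : o ≠ p) (l : ℝ)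
    {Q : Matrix ι ι ℝ} (hQ : Q ∈ orthogonalGroup ι ℝ) :
    Q * diagonal (boostSingularValues o p l ^ 2) * Qᵀ =
      1 + ((l ^ 2 - 1) • vecMulVec (Q.col o) (Q.col o) +
        (l⁻¹ ^ 2 - 1) • vecMulVec (Q.col p) (Q.col p)) := by
  have hQQ : Q * Qᵀ = 1 := (mem_orthogonalGroup_iff ι ℝ).mp hQ
  simp only [diagonal_boostSingularValues_sq hop, Matrix.mul_add, Matrix.add_mul, Matrix.mul_one,
    Matrix.mul_smul, Matrix.smul_mul, mul_vecMulVec, vecMulVec_mul, mulVec_single_one,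
    single_one_vecMul, row_transpose, hQQ]

end Boosts

section LorentzMatrices

variable {ι : Type*} [DecidableEq ι]

/-- The Gram matrix `diag(1, …, 1, -1, 1, …, 1)` of the Lorentz form on `ℝ^ι`, where `o` is the
timelike coordinate. -/
def minkowskiMatrix (o : ι) : Matrix ι ι ℝ :=
  diagonal (Function.update 1 o (-1))

lemma minkowskiMatrix_eq_one_sub (o : ι) :
    minkowskiMatrix o = 1 - (2 : ℝ) • vecMulVec (Pi.single o 1) (Pi.single o 1) := by
  ext i j
  obtain rfl | hij := eq_or_ne i j
  · obtain rfl | hio := eq_or_ne i o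
    · norm_num [minkowskiMatrix, vecMulVec_apply]
    · simp [minkowskiMatrix, vecMulVec_apply, *]
  · obtain rfl | hio := eq_or_ne i o <;> simp [minkowskiMatrix, vecMulVec_apply, *]

variable [Fintype ι]

lemma minkowskiMatrix_mul_self (o : ι) : minkowskiMatrix o * minkowskiMatrix o = 1 := by
  rw [minkowskiMatrix, diagonal_mul_diagonal, ← diagonal_one]
  congr 1
  ext i
  obtain rfl | hi := eq_or_ne i o <;> simp [*]

/-- Membership of `A` in the Lorentz group `O(1, |ι| - 1)` with timelike coordinate `o`, expressed
by the Gram matrix rather than the quadratic form. -/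
def IsLorentz (o : ι) (A : Matrix ι ι ℝ) : Prop :=
  Aᵀ * minkowskiMatrix o * A = minkowskiMatrix o

namespace IsLorentz

variable {o p : ι} {A : Matrix ι ι ℝ}

lemma mul_minkowskiMatrix_mul_transpose (hA : IsLorentz o A) :
    A * minkowskiMatrix o * Aᵀ = minkowskiMatrix o := by
  have hinv : A * (minkowskiMatrix o * Aᵀ * minkowskiMatrix o) = 1 := by
    rw [mul_eq_one_comm, Matrix.mul_assoc, Matrix.mul_assoc, ← Matrix.mul_assoc Aᵀ, hA,
      minkowskiMatrix_mul_self]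
  calc A * minkowskiMatrix o * Aᵀ
      = A * (minkowskiMatrix o * Aᵀ * minkowskiMatrix o) * minkowskiMatrix o := by
        simp only [Matrix.mul_assoc, minkowskiMatrix_mul_self, Matrix.mul_one]
    _ = minkowskiMatrix o := by rw [hinv, Matrix.one_mul]

lemma transpose_mul_self (hA : IsLorentz o A) :
    Aᵀ * A = 1 + (2 : ℝ) •
      (vecMulVec (A.row o) (A.row o) - vecMulVec (Pi.single o 1) (Pi.single o 1)) := by
  have hgram : Aᵀ * A - (2 : ℝ) • vecMulVec (A.row o) (A.row o) =
      1 - (2 : ℝ) • vecMulVec (Pi.single o 1) (Pi.single o 1) := by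
    simpa only [IsLorentz, minkowskiMatrix_eq_one_sub, Matrix.mul_sub, Matrix.sub_mul,
      Matrix.mul_one, Matrix.mul_smul, Matrix.smul_mul, mul_vecMulVec, vecMulVec_mul,
      mulVec_single_one, single_one_vecMul, col_transpose] using hA
  rw [sub_eq_iff_eq_add.mp hgram, smul_sub]
  abel

lemma row_dotProduct_row (hA : IsLorentz o A) :
    A.row o ⬝ᵥ A.row o = 2 * A o o ^ 2 - 1 := by
  have hdiag : A * Aᵀ - (2 : ℝ) • vecMulVec (A.col o) (A.col o) = minkowskiMatrix o := by
    simpa only [minkowskiMatrix_eq_one_sub, Matrix.mul_sub, Matrix.sub_mul, Matrix.mul_one,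
      Matrix.mul_smul, Matrix.smul_mul, mul_vecMulVec, vecMulVec_mul, mulVec_single_one,
      single_one_vecMul, row_transpose] using hA.mul_minkowskiMatrix_mul_transpose
  have hentry : A.row o ⬝ᵥ A.row o - 2 * (A o o * A o o) = -1 := by
    simpa [minkowskiMatrix, vecMulVec_apply, mul_apply, dotProduct] using congrFun₂ hdiag o o
  linear_combination hentry

lemma exists_row_eq (hA : IsLorentz o A) (hop : o ≠ p) :
    ∃ (u : EuclideanSpace ℝ ι) (a s : ℝ), ‖u‖ = 1 ∧
      inner ℝ (EuclideanSpace.single o 1) u = 0 ∧ a ^ 2 - s ^ 2 = 1 ∧ 0 ≤ a * s ∧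
      A.row o = a • Pi.single o 1 + s • u.ofLp := by
  have hcoord (x : EuclideanSpace ℝ ι) : inner ℝ (EuclideanSpace.single o 1) x = x o := by
    simp [EuclideanSpace.inner_single_left]
  obtain ⟨u, s, hu, heu, hnonneg, hdecomp⟩ := exists_norm_eq_one_eq_inner_smul_add_smul
    (e := EuclideanSpace.single o (1 : ℝ)) (v := EuclideanSpace.single p 1) (by simp) (by simp)
    (by simp [hcoord, hop]) (WithLp.toLp 2 (A.row o))
  rw [hcoord] at hnonneg hdecomp
  have hrow : A.row o = A o o • Pi.single o 1 + s • u.ofLp := congrArg WithLp.ofLp hdecomp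
  have hnorm : A.row o ⬝ᵥ A.row o = A o o ^ 2 + s ^ 2 := by
    have huo : u o = 0 := by rwa [hcoord] at heu
    have huu : u.ofLp ⬝ᵥ u.ofLp = 1 := by
      simpa [hu, dotProduct, sq] using (EuclideanSpace.real_norm_sq_eq u).symm
    simp [hrow, huo, huu, sq]
  refine ⟨u, A o o, s, hu, heu, ?_, hnonneg, hrow⟩
  linear_combination hnorm - hA.row_dotProduct_row

lemma exists_transpose_mul_self_eq (hA : IsLorentz o A) (hop : o ≠ p) :
    ∃ Q ∈ orthogonalGroup ι ℝ, ∃ l : ℝ, 0 < l ∧ l ≤ 1 ∧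
      Aᵀ * A = Q * diagonal (boostSingularValues o p l ^ 2) * Qᵀ := by
  obtain ⟨u, a, s, hu, heu, has, hnonneg, hrow⟩ := hA.exists_row_eq hop
  have he : ‖EuclideanSpace.single o (1 : ℝ)‖ = 1 := by simp
  obtain ⟨Q, hQ, hQo, hQp⟩ := exists_mem_orthogonalGroup_col_eq_pair hop
    (norm_inv_sqrt_two_smul_sub he hu heu) (norm_inv_sqrt_two_smul_add he hu heu)
    (by rw [inner_smul_left, inner_smul_right, real_inner_comm,
      (real_inner_add_sub_eq_zero_iff _ _).mpr (he.trans hu.symm), mul_zero, mul_zero])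
  have hmul : (a - s) * (a + s) = 1 := by linear_combination has
  refine ⟨Q, hQ, |a - s|, abs_pos.mpr (left_ne_zero_of_mul_eq_one hmul),
    abs_sub_le_one_of_sq_sub_sq has hnonneg, ?_⟩
  rw [mul_diagonal_boostSingularValues_sq_mul_transpose hop _ hQ, hA.transpose_mul_self,
    hrow, two_smul_vecMulVec_sub_eq_of_sq_sub_sq has, hQo, hQp, ← abs_inv, sq_abs, sq_abs,
    inv_eq_of_mul_eq_one_right hmul]
  simp

end IsLorentz

lemma isLorentz_of_lorentzQ_mulVec {d : ℕ} {o : Fin d} (ho : (o : ℕ) = 0)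
    {A : Matrix (Fin d) (Fin d) ℝ} (hA : ∀ x, lorentzQ (A *ᵥ x) = lorentzQ x) :
    IsLorentz o A := by
  have hq (x : Fin d → ℝ) :
      QuadraticMap.weightedSumSquares ℝ (Function.update 1 o (-1) : Fin d → ℝ) x = lorentzQ x := by
    simp [QuadraticMap.weightedSumSquares_apply, lorentzQ, Function.update_apply, Fin.ext_iff, ho,
      sq]
  exact transpose_mul_diagonal_mul_of_weightedSumSquares_mulVec fun x ↦ by rw [hq, hq, hA]

theorem lorentz_KAK_decomposition_general {o p : ι} (hop : o ≠ p) {A : Matrix ι ι ℝ}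
    (hA : IsLorentz o A) :
    ∃ L ∈ orthogonalGroup ι ℝ, ∃ R ∈ specialOrthogonalGroup ι ℝ, ∃ l : ℝ,
      L.det = A.det ∧ 0 < l ∧ l ≤ 1 ∧ A = L * diagonal (boostSingularValues o p l) * R := by
  obtain ⟨Q, hQ, l, hl0, hl1, hgram⟩ := hA.exists_transpose_mul_self_eq hop
  obtain ⟨L₀, hL₀, hA₀⟩ := exists_mem_orthogonalGroup_eq_mul_diagonal_mul
    (boostSingularValues_ne_zero o p hl0.ne') hQ hgram
  have : Nonempty ι := ⟨o⟩
  obtain ⟨L, hL, R, hR, hLR⟩ := exists_mem_specialOrthogonalGroup_mul_diagonal_mul_eq hL₀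
    (transpose_mem_unitaryGroup_iff.mpr hQ) (boostSingularValues o p l)
  have hfactor : A = L * diagonal (boostSingularValues o p l) * R := hA₀.trans hLR
  refine ⟨L, hL, R, hR, l, ?_, hl0, hl1, hfactor⟩
  rw [hfactor, det_mul, det_mul, det_diagonal_boostSingularValues hop hl0.ne',
    (mem_specialOrthogonalGroup_iff.mp hR).2, mul_one, mul_one]

end LorentzMatrices

/-- Any unimodular matrix preserving the standard Lorentz form can be written as
`L * D * R` with `L, R ∈ SO(d)` and `D = diag(λ, 1, …, 1, λ⁻¹)` for some `0 < λ ≤ 1`. -/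
theorem lorentz_KAK_decomposition {d : ℕ} (hd : 3 ≤ d)
    (A : Matrix (Fin d) (Fin d) ℝ) (hdet : A.det = 1)
    (hA : ∀ x : Fin d → ℝ, lorentzQ (A.mulVec x) = lorentzQ x) :
    ∃ (L R : Matrix (Fin d) (Fin d) ℝ) (l : ℝ),
      L * L.transpose = 1 ∧ L.det = 1 ∧
      R * R.transpose = 1 ∧ R.det = 1 ∧
      0 < l ∧ l ≤ 1 ∧
      A = L * Matrix.diagonal
          (fun i : Fin d => if (i : ℕ) = 0 then l else if (i : ℕ) = d - 1 then l⁻¹ else 1) * R := by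
  obtain ⟨L, hL, R, ⟨hR, hRdet⟩, l, hLdet, hl0, hl1, hfactor⟩ :=
    lorentz_KAK_decomposition_general (o := ⟨0, by lia⟩) (p := ⟨d - 1, by lia⟩)
      (Fin.ne_of_val_ne (show 0 ≠ d - 1 by lia)) (isLorentz_of_lorentzQ_mulVec rfl hA)
  unfold boostSingularValues at hfactor
  exact ⟨L, R, l, (mem_orthogonalGroup_iff _ ℝ).mp hL, hLdet.trans hdet,
    (mem_orthogonalGroup_iff _ ℝ).mp hR, hRdet, hl0, hl1, by simpa only [Fin.ext_iff] using hfactor⟩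
end

section
/- Let A_n be the 3×3 real matrix with rows (1, n, n²/2), (0, 1, n), (0, 0, 1) (i.e. A_n = exp(nN) for the nilpotent matrix N with N e₁ = 0, N e₂ = e₁, N e₃ = e₂). Then the approximately stable space of the sequence (A_n) is AS(0,(A_n)) = span{e₁, e₂}: every vector of span{e₁,e₂} is a limit of a sequence (v_n) with (A_n v_n) bounded, while no vector outside span{e₁,e₂} has this property. -/
open Filter

/-!
Approximately stable vectors form a subspace, and each of them is killed by every limit of
`c n • A n` with `c n → 0`, since `c n • A n (u n)` is a null sequence times a bounded one.
Here `(2 / n²) • A n` tends to the matrix unit `v ↦ v₃ e₁`, so approximately stable vectors have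
no `e₃` component. Conversely `A n e₁ = e₁`, and perturbing `e₂` to `e₂ - (2 / n) e₃` cancels the
unbounded first coordinate of `A n e₂`: the images tend to `-e₂`.
-/

open scoped Topology Matrix

namespace ApproxStable

variable {d : ℕ} {A : ℕ → Matrix (Fin d) (Fin d) ℝ} {v w : Fin d → ℝ}

theorem of_tendsto {u : ℕ → Fin d → ℝ} (hu : Tendsto u atTop (𝓝 v))
    (hAu : Tendsto (fun n => A n *ᵥ u n) atTop (𝓝 w)) : ApproxStable A v := by
  obtain ⟨C, hC⟩ := (Metric.isBounded_range_of_tendsto _ hAu).exists_norm_le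
  exact ⟨u, hu, C, fun n => hC _ (Set.mem_range_self n)⟩

theorem zero : ApproxStable A 0 :=
  of_tendsto (u := fun _ => 0) tendsto_const_nhds (w := 0) (by simp)

theorem add (hv : ApproxStable A v) (hw : ApproxStable A w) : ApproxStable A (v + w) := by
  obtain ⟨x, hx, C, hC⟩ := hv
  obtain ⟨y, hy, D, hD⟩ := hw
  refine ⟨fun n => x n + y n, hx.add hy, C + D, fun n => ?_⟩
  rw [Matrix.mulVec_add]
  exact norm_add_le_of_le (hC n) (hD n)

theorem smul (a : ℝ) (hv : ApproxStable A v) : ApproxStable A (a • v) := by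
  obtain ⟨u, hu, C, hC⟩ := hv
  refine ⟨fun n => a • u n, hu.const_smul a, ‖a‖ * C, fun n => ?_⟩
  rw [Matrix.mulVec_smul, norm_smul]
  exact mul_le_mul_of_nonneg_left (hC n) (norm_nonneg a)

theorem mulVec_eq_zero_of_tendsto_smul (hv : ApproxStable A v) {c : ℕ → ℝ}
    {B : Matrix (Fin d) (Fin d) ℝ} (hc : Tendsto c atTop (𝓝 0))
    (hB : Tendsto (fun n => c n • A n) atTop (𝓝 B)) : B *ᵥ v = 0 := by
  obtain ⟨u, hu, C, hC⟩ := hv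
  have tendsto_mulVec : Tendsto (fun n => (c n • A n) *ᵥ u n) atTop (𝓝 (B *ᵥ v)) :=
    ((continuous_fst.matrix_mulVec continuous_snd).tendsto (B, v)).comp (hB.prodMk_nhds hu)
  have tendsto_zero : Tendsto (fun n => (c n • A n) *ᵥ u n) atTop (𝓝 0) := by
    simp only [Matrix.smul_mulVec]
    exact hc.zero_smul_isBoundedUnder_le (isBoundedUnder_of ⟨C, hC⟩)
  exact tendsto_nhds_unique tendsto_mulVec tendsto_zero

end ApproxStable

/-- The approximately stable space `AS(0, (A n))` as a subspace of `ℝ^d`. -/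
def approxStableSubmodule {d : ℕ} (A : ℕ → Matrix (Fin d) (Fin d) ℝ) :
    Submodule ℝ (Fin d → ℝ) where
  carrier := {v | ApproxStable A v}
  zero_mem' := ApproxStable.zero
  add_mem' := ApproxStable.add
  smul_mem' a _ := ApproxStable.smul a

theorem span_single_pair_eq_spanSubset {ι R : Type*} [Finite ι] [DecidableEq ι] [Semiring R]
    (i j : ι) :
    Submodule.span R {(Pi.single i 1 : ι → R), Pi.single j 1} = Pi.spanSubset R {i, j} := by
  simp only [Pi.spanSubset, Set.image_pair, Pi.basisFun_apply]

theorem tendsto_const_div_pow_atTop_nhds_zero {𝕜 : Type*} [Field 𝕜] [LinearOrder 𝕜]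
    [IsStrictOrderedRing 𝕜] [TopologicalSpace 𝕜] [OrderTopology 𝕜] (a : 𝕜) {k : ℕ} (hk : k ≠ 0) :
    Tendsto (fun t : 𝕜 => a / t ^ k) atTop (𝓝 0) :=
  tendsto_const_nhds.div_atTop (tendsto_pow_atTop hk)

/-- The one-parameter unipotent group `t ↦ exp (t N)` generated by the nilpotent Jordan block `N`
of size three, written out entrywise. -/
noncomputable def expJordanBlock (t : ℝ) : Matrix (Fin 3) (Fin 3) ℝ :=
  !![1, t, t ^ 2 / 2; 0, 1, t; 0, 0, 1]

theorem expJordanBlock_mulVec (t : ℝ) (v : Fin 3 → ℝ) :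
    expJordanBlock t *ᵥ v = ![v 0 + t * v 1 + t ^ 2 / 2 * v 2, v 1 + t * v 2, v 2] := by
  ext i
  fin_cases i <;> simp [expJordanBlock, Matrix.mulVec, dotProduct, Fin.sum_univ_three]

theorem expJordanBlock_mulVec_single_zero (t : ℝ) :
    expJordanBlock t *ᵥ Pi.single 0 1 = Pi.single 0 1 := by
  rw [expJordanBlock_mulVec]
  ext i
  fin_cases i <;> simp

theorem expJordanBlock_mulVec_single_one_sub {t : ℝ} (ht : t ≠ 0) :
    expJordanBlock t *ᵥ (Pi.single 1 1 - (2 / t) • Pi.single 2 1) =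
      -Pi.single 1 1 - (2 / t) • Pi.single 2 1 := by
  rw [expJordanBlock_mulVec]
  ext i
  fin_cases i <;> simp <;> field_simp <;> ring

theorem two_div_sq_smul_expJordanBlock {t : ℝ} (ht : t ≠ 0) :
    (2 / t ^ 2) • expJordanBlock t =
      Matrix.single 0 2 1 + (2 / t) • !![0, 1, 0; 0, 0, 1; 0, 0, 0] + (2 / t ^ 2) • 1 := by
  ext i j
  fin_cases i <;> fin_cases j <;> simp [expJordanBlock, ht] <;> field_simp

theorem tendsto_two_div_sq_smul_expJordanBlock :
    Tendsto (fun t : ℝ => (2 / t ^ 2) • expJordanBlock t) atTop (𝓝 (Matrix.single 0 2 1)) := by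
  have tendsto_two_div : Tendsto (fun t : ℝ => 2 / t) atTop (𝓝 0) :=
    tendsto_const_nhds.div_atTop tendsto_id
  have tendsto_two_div_sq : Tendsto (fun t : ℝ => 2 / t ^ 2) atTop (𝓝 0) :=
    tendsto_const_div_pow_atTop_nhds_zero 2 two_ne_zero
  have tendsto_expansion (B C D : Matrix (Fin 3) (Fin 3) ℝ) :
      Tendsto (fun t : ℝ => B + (2 / t) • C + (2 / t ^ 2) • D) atTop (𝓝 B) := by
    simpa only [zero_smul, add_zero] using (tendsto_const_nhds.add
      (tendsto_two_div.smul_const C)).add (tendsto_two_div_sq.smul_const D)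
  refine (tendsto_expansion _ !![0, 1, 0; 0, 0, 1; 0, 0, 0] 1).congr' ?_
  filter_upwards [eventually_ne_atTop 0] with t ht
  exact (two_div_sq_smul_expJordanBlock ht).symm

theorem approxStable_expJordanBlock_single_zero :
    ApproxStable (fun n : ℕ => expJordanBlock n) (Pi.single 0 1) :=
  .of_tendsto tendsto_const_nhds <| by
    simpa only [expJordanBlock_mulVec_single_zero] using tendsto_const_nhds

theorem approxStable_expJordanBlock_single_one :
    ApproxStable (fun n : ℕ => expJordanBlock n) (Pi.single 1 1) := by
  have tendsto_sub (x : Fin 3 → ℝ) :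
      Tendsto (fun n : ℕ => x - (2 / n : ℝ) • Pi.single 2 1) atTop (𝓝 x) := by
    simpa using tendsto_const_nhds.sub
      ((tendsto_const_div_atTop_nhds_zero_nat (2 : ℝ)).smul_const (Pi.single 2 1 : Fin 3 → ℝ))
  refine .of_tendsto (tendsto_sub _) ((tendsto_sub (-Pi.single 1 1)).congr' ?_)
  filter_upwards [eventually_ne_atTop 0] with n hn
  exact (expJordanBlock_mulVec_single_one_sub (Nat.cast_ne_zero.2 hn)).symm

theorem ApproxStable.apply_two_eq_zero_of_expJordanBlock {v : Fin 3 → ℝ}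
    (hv : ApproxStable (fun n : ℕ => expJordanBlock n) v) : v 2 = 0 := by
  have single_mulVec_eq_zero : Matrix.single (0 : Fin 3) 2 1 *ᵥ v = 0 :=
    hv.mulVec_eq_zero_of_tendsto_smul
      ((tendsto_const_div_pow_atTop_nhds_zero 2 two_ne_zero).comp tendsto_natCast_atTop_atTop)
      (tendsto_two_div_sq_smul_expJordanBlock.comp tendsto_natCast_atTop_atTop)
  simpa [Matrix.single_mulVec] using congrFun single_mulVec_eq_zero 0

/-- For the fundamental unipotent example `A_n = exp(nN)`, the approximately stable
space is the span of the first two basis vectors. -/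
theorem approxStable_fundamental_example :
    {v | ApproxStable
        (fun n : ℕ => !![(1 : ℝ), (n : ℝ), (n : ℝ) ^ 2 / 2; 0, 1, (n : ℝ); 0, 0, 1]) v} =
      (Submodule.span ℝ {(Pi.single 0 1 : Fin 3 → ℝ), (Pi.single 1 1 : Fin 3 → ℝ)} :
        Submodule ℝ (Fin 3 → ℝ)) := by
  change (approxStableSubmodule (fun n : ℕ => expJordanBlock n) : Set (Fin 3 → ℝ)) = _
  refine congrArg _ (le_antisymm ?_ (Submodule.span_le.2 (Set.pair_subset ?_ ?_)))
  · intro v hv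
    rw [span_single_pair_eq_spanSubset, Pi.mem_spanSubset_iff]
    intro i hi
    obtain rfl : i = 2 := by grind
    exact ApproxStable.apply_two_eq_zero_of_expJordanBlock hv
  · exact approxStable_expJordanBlock_single_zero
  · exact approxStable_expJordanBlock_single_one
end

section
/- Let (b_n) and (c_n) be real sequences tending to +∞. Let B_n be the 3×3 matrix with rows (1, b_n, b_n²/2), (0, 1, −b_n), (0, 0, 1), let C_n = diag(c_n, 1, c_n⁻¹), and set A_n = C_n B_n. Then e₁ is strongly approximately stable for (A_n): there exists a sequence u_n → e₁ with A_n u_n → 0; nevertheless A_n(e₁) = c_n e₁, so ‖A_n e₁‖ → ∞. -/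
open Filter

/-- `v` is strongly approximately stable for `(A n)` if it is the limit of a sequence
`(u n)` with `A n (u n) → 0`. -/
def StronglyApproxStable {d : ℕ} (A : ℕ → Matrix (Fin d) (Fin d) ℝ) (v : Fin d → ℝ) : Prop :=
  ∃ u : ℕ → Fin d → ℝ, Tendsto u atTop (nhds v) ∧
    Tendsto (fun n => (A n).mulVec (u n)) atTop (nhds 0)

/-!
Since `B_n` fixes `e₁`, the matrix `A_n = C_n B_n` stretches `e₁` by `c_n`. But the line
`B_n⁻¹ (ℝ e₃)` is spanned by `(1, -(2/3) b_n⁻¹, -(2/3) b_n⁻²)`, which converges to `e₁`, and `A_n`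
maps this vector to `-(2/3) c_n⁻¹ b_n⁻² e₃ → 0`.
-/

open Bornology Matrix Topology

theorem stronglyApproxStable_diagonal_mul {d : ℕ} {D : ℕ → Fin d → ℝ}
    {B : ℕ → Matrix (Fin d) (Fin d) ℝ} {u : ℕ → Fin d → ℝ} {v : Fin d → ℝ} {j : Fin d}
    {t : ℕ → ℝ} (hu : Tendsto u atTop (𝓝 v)) (hB : ∀ᶠ n in atTop, B n *ᵥ u n = Pi.single j (t n))
    (ht : Tendsto (fun n => D n j * t n) atTop (𝓝 0)) :
    StronglyApproxStable (fun n => diagonal (D n) * B n) v := by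
  have image_tendsto : Tendsto (fun n => (Pi.single j (D n j * t n) : Fin d → ℝ)) atTop (𝓝 0) := by
    simpa only [Pi.single_zero, Function.comp_def] using
      ((continuous_single (A := fun _ : Fin d => ℝ) j).tendsto 0).comp ht
  refine ⟨u, hu, image_tendsto.congr' ?_⟩
  filter_upwards [hB] with n hn
  rw [← mulVec_mulVec, hn, diagonal_mulVec_single]

section Field

variable {K : Type*} [Field K]

/-- The upper unitriangular factor `B_n` of the example, at the parameter `b = b_n`. -/
def unipotentFactor (b : K) : Matrix (Fin 3) (Fin 3) K :=
  !![1, b, b ^ 2 / 2; 0, 1, -b; 0, 0, 1]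

/-- The diagonal factor `C_n` of the example, at the parameter `c = c_n`. -/
def hyperbolicFactor (c : K) : Matrix (Fin 3) (Fin 3) K :=
  diagonal ![c, 1, c⁻¹]

/-- The vector with first coordinate `1` that `unipotentFactor b` maps into the line of `e₃`
(for `b ≠ 0`); it is the approximation of `e₁` witnessing strong approximate stability. -/
def unipotentPreimage (b : K) : Fin 3 → K :=
  ![1, -(2 / 3) * b⁻¹, -(2 / 3) * b⁻¹ ^ 2]

theorem unipotentFactor_mulVec (b x y z : K) :
    unipotentFactor b *ᵥ ![x, y, z] = ![x + b * y + b ^ 2 / 2 * z, y - b * z, z] := by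
  ext i
  fin_cases i <;>
    simp [unipotentFactor, mulVec, dotProduct, Fin.sum_univ_three, sub_eq_add_neg]

theorem unipotentFactor_mulVec_single_zero (b x : K) :
    unipotentFactor b *ᵥ Pi.single 0 x = Pi.single 0 x := by
  ext i
  fin_cases i <;> simp [unipotentFactor]

theorem hyperbolicFactor_mul_unipotentFactor_mulVec_single_zero (b c x : K) :
    (hyperbolicFactor c * unipotentFactor b) *ᵥ Pi.single 0 x = c • Pi.single 0 x := by
  rw [← mulVec_mulVec, unipotentFactor_mulVec_single_zero, hyperbolicFactor,
    diagonal_mulVec_single, ← Pi.single_smul, smul_eq_mul, cons_val_zero]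

theorem unipotentFactor_mulVec_unipotentPreimage (h2 : (2 : K) ≠ 0) (h3 : (3 : K) ≠ 0) {b : K}
    (hb : b ≠ 0) :
    unipotentFactor b *ᵥ unipotentPreimage b = Pi.single 2 (-(2 / 3) * b⁻¹ ^ 2) := by
  have first_coord : 1 + b * (-(2 / 3) * b⁻¹) + b ^ 2 / 2 * (-(2 / 3) * b⁻¹ ^ 2) = 0 := by
    field_simp
    ring
  have second_coord : -(2 / 3) * b⁻¹ - b * (-(2 / 3) * b⁻¹ ^ 2) = 0 := by
    field_simp
    ring
  rw [unipotentPreimage, unipotentFactor_mulVec, first_coord, second_coord]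
  ext i
  fin_cases i <;> rfl

end Field

theorem tendsto_unipotentPreimage {ι 𝕜 : Type*} [NormedField 𝕜] {l : Filter ι} {b : ι → 𝕜}
    (hb : Tendsto b l (cobounded 𝕜)) :
    Tendsto (fun n => unipotentPreimage (b n)) l (𝓝 (Pi.single 0 1)) := by
  have inv_tendsto : Tendsto (fun n => (b n)⁻¹) l (𝓝 0) := tendsto_inv₀_cobounded.comp hb
  rw [tendsto_pi_nhds]
  intro i
  fin_cases i
  · exact tendsto_const_nhds
  · simpa [unipotentPreimage] using inv_tendsto.const_mul (-(2 / 3))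
  · simpa [unipotentPreimage] using (inv_tendsto.pow 2).const_mul (-(2 / 3))

theorem stronglyApproxStable_hyperbolicFactor_mul_unipotentFactor {b c : ℕ → ℝ}
    (hb : Tendsto b atTop (cobounded ℝ))
    (hcb : Tendsto (fun n => (c n)⁻¹ * (b n)⁻¹ ^ 2) atTop (𝓝 0)) :
    StronglyApproxStable (fun n => hyperbolicFactor (c n) * unipotentFactor (b n))
      (Pi.single 0 1) := by
  refine stronglyApproxStable_diagonal_mul (j := 2) (tendsto_unipotentPreimage hb)
    (t := fun n => -(2 / 3) * (b n)⁻¹ ^ 2) ?_ ?_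
  · filter_upwards [hb.eventually_ne_cobounded 0] with n hn
    exact unipotentFactor_mulVec_unipotentPreimage two_ne_zero three_ne_zero hn
  · simpa [mul_left_comm] using hcb.const_mul (-(2 / 3))

theorem chaos_example_general {b c : ℕ → ℝ}
    (hb : Tendsto b atTop (cobounded ℝ)) (hc : Tendsto c atTop (cobounded ℝ)) :
    let A : ℕ → Matrix (Fin 3) (Fin 3) ℝ := fun n => hyperbolicFactor (c n) * unipotentFactor (b n)
    StronglyApproxStable A (Pi.single 0 1) ∧
      (∀ n, A n *ᵥ Pi.single 0 1 = c n • Pi.single 0 1) ∧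
      Tendsto (fun n => ‖A n *ᵥ Pi.single 0 1‖) atTop atTop := by
  intro A
  have hA (n : ℕ) : A n *ᵥ Pi.single 0 1 = c n • Pi.single 0 1 :=
    hyperbolicFactor_mul_unipotentFactor_mulVec_single_zero (b n) (c n) 1
  refine ⟨stronglyApproxStable_hyperbolicFactor_mul_unipotentFactor hb ?_, hA, ?_⟩
  · have b_inv_tendsto : Tendsto (fun n => (b n)⁻¹) atTop (𝓝 0) := tendsto_inv₀_cobounded.comp hb
    have c_inv_tendsto : Tendsto (fun n => (c n)⁻¹) atTop (𝓝 0) := tendsto_inv₀_cobounded.comp hc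
    simpa using c_inv_tendsto.mul (b_inv_tendsto.pow 2)
  · have norm_eq (n : ℕ) : ‖A n *ᵥ Pi.single 0 1‖ = ‖c n‖ := by
      rw [hA, norm_smul, Pi.norm_single, norm_one, mul_one]
    simpa only [norm_eq, Function.comp_def] using tendsto_norm_cobounded_atTop.comp hc

/-- "Chaos" example: for `A_n = C_n B_n` with `B_n` unipotent and `C_n` hyperbolic,
`e₁` is strongly approximately stable although `A_n e₁ = c_n e₁` blows up. -/
theorem chaos_example (b c : ℕ → ℝ)
    (hb : Tendsto b atTop atTop) (hc : Tendsto c atTop atTop) :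
    let B : ℕ → Matrix (Fin 3) (Fin 3) ℝ :=
      fun n => !![1, b n, (b n) ^ 2 / 2; 0, 1, -(b n); 0, 0, 1]
    let C : ℕ → Matrix (Fin 3) (Fin 3) ℝ :=
      fun n => Matrix.diagonal ![c n, 1, (c n)⁻¹]
    let A : ℕ → Matrix (Fin 3) (Fin 3) ℝ := fun n => C n * B n
    StronglyApproxStable A (Pi.single 0 1 : Fin 3 → ℝ) ∧
      (∀ n, (A n).mulVec (Pi.single 0 1 : Fin 3 → ℝ) = c n • (Pi.single 0 1 : Fin 3 → ℝ)) ∧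
      Tendsto (fun n => ‖(A n).mulVec (Pi.single 0 1 : Fin 3 → ℝ)‖) atTop atTop :=
  chaos_example_general (hb.mono_right IsOrderBornology.atTop_le_cobounded)
    (hc.mono_right IsOrderBornology.atTop_le_cobounded)
end

section
/- (Calabi–Markus phenomenon, basic fact.) Let q ≥ 2, let Q be the Lorentz quadratic form Q(x) = −x₁² + x₂² + ⋯ + x_{q+1}² on ℝ^{1+q}, and let K = {x ∈ ℝ^{1+q} : Q(x) = 1 and x₁ = 0}. Then for every linear map h of ℝ^{1+q} preserving Q, one has h(K) ∩ K ≠ ∅. -/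
/-!
The points of `{x₁ = 0}` sent by `h` back into `{x₁ = 0}` form a subspace cut out by two linear
equations, hence of dimension at least `q - 1 ≥ 1`. As `Q` is positive definite on `{x₁ = 0}`, a
nonzero vector of that subspace can be rescaled to satisfy `Q = 1`.
-/

theorem exists_ne_zero_forall_apply_eq_zero {F V ι : Type*} [DivisionRing F] [AddCommGroup V]
    [Module F V] [Fintype ι] (f : ι → V →ₗ[F] F) (hι : Fintype.card ι < Module.finrank F V) :
    ∃ x ≠ 0, ∀ i, f i x = 0 := by
  have : FiniteDimensional F V := Module.finite_of_finrank_pos (Nat.zero_lt_of_lt hι)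
  have hker : LinearMap.ker (LinearMap.pi f) ≠ ⊥ :=
    LinearMap.ker_ne_bot_of_finrank_lt (by rwa [Module.finrank_fintype_fun_eq_card])
  obtain ⟨x, hx, hx0⟩ := (Submodule.ne_bot_iff _).mp hker
  exact ⟨x, hx0, congrFun (LinearMap.mem_ker.mp hx)⟩

theorem lorentzQ_smul {d : ℕ} (c : ℝ) (x : Fin d → ℝ) :
    lorentzQ (c • x) = c ^ 2 * lorentzQ x := by
  simp only [lorentzQ, Pi.smul_apply, smul_eq_mul, Finset.mul_sum]
  exact Finset.sum_congr rfl fun i _ => by ring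

theorem lorentzQ_inv_sqrt_smul {d : ℕ} {x : Fin d → ℝ} (hx : 0 < lorentzQ x) :
    lorentzQ ((√(lorentzQ x))⁻¹ • x) = 1 := by
  rw [lorentzQ_smul, inv_pow, Real.sq_sqrt hx.le, inv_mul_cancel₀ hx.ne']

theorem lorentzQ_eq_sum_sq_of_apply_zero {n : ℕ} {x : Fin (n + 1) → ℝ} (hx : x 0 = 0) :
    lorentzQ x = ∑ i, x i ^ 2 := by
  simp [lorentzQ, Fin.sum_univ_succ, hx]

theorem lorentzQ_pos_of_apply_zero {n : ℕ} {x : Fin (n + 1) → ℝ} (hx : x 0 = 0) (hne : x ≠ 0) :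
    0 < lorentzQ x := by
  obtain ⟨i, hi⟩ := Function.ne_iff.mp hne
  rw [lorentzQ_eq_sum_sq_of_apply_zero hx]
  exact Finset.sum_pos' (fun j _ => sq_nonneg (x j)) ⟨i, Finset.mem_univ i, sq_pos_of_ne_zero hi⟩

theorem exists_lorentzQ_eq_one_and_apply_eq_zero {q : ℕ} (hq : 2 ≤ q)
    (f : (Fin (q + 1) → ℝ) →ₗ[ℝ] ℝ) :
    ∃ x : Fin (q + 1) → ℝ, (lorentzQ x = 1 ∧ x 0 = 0) ∧ f x = 0 := by
  obtain ⟨y, hy, hfy⟩ := exists_ne_zero_forall_apply_eq_zero ![LinearMap.proj 0, f]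
    (by rw [Fintype.card_fin, Module.finrank_fin_fun]; lia)
  have hy0 : y 0 = 0 := hfy 0
  have hfy0 : f y = 0 := hfy 1
  have hQy : 0 < lorentzQ y := lorentzQ_pos_of_apply_zero hy0 hy
  refine ⟨(√(lorentzQ y))⁻¹ • y, ⟨lorentzQ_inv_sqrt_smul hQy, ?_⟩, ?_⟩
  · rw [Pi.smul_apply, hy0, smul_zero]
  · rw [map_smul, hfy0, smul_zero]

/-- Calabi–Markus phenomenon, basic fact: with `K` the trace of the de Sitter space
`{Q = 1}` on the spacelike hyperplane `{x₁ = 0}`, every linear map preserving `Q`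
satisfies `h(K) ∩ K ≠ ∅`. -/
theorem calabi_markus {q : ℕ} (hq : 2 ≤ q)
    (h : Matrix (Fin (q + 1)) (Fin (q + 1)) ℝ)
    (hQ : ∀ x : Fin (q + 1) → ℝ, lorentzQ (h.mulVec x) = lorentzQ x) :
    ∃ x : Fin (q + 1) → ℝ,
      (lorentzQ x = 1 ∧ x 0 = 0) ∧ (lorentzQ (h.mulVec x) = 1 ∧ (h.mulVec x) 0 = 0) := by
  obtain ⟨x, hx, hhx⟩ :=
    exists_lorentzQ_eq_one_and_apply_eq_zero hq (LinearMap.proj 0 ∘ₗ h.mulVecLin)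
  exact ⟨x, hx, (hQ x).trans hx.1, hhx⟩
end

section
/- Let q ≥ 2 and equip ℝ^{2+q} with the quadratic form Q(x) = −x₁² − x₂² + x₃² + ⋯ + x_{q+2}², with polar form ⟨·,·⟩. For a nonzero isotropic vector u, set H_u = {x : Q(x) = −1 and ⟨u, x⟩ = 0}. Then for nonzero isotropic vectors u and v, the sets H_u and H_v are disjoint if and only if ⟨u, v⟩ = 0 and u, v are not collinear. -/
/-- The quadratic form of signature `(2,q)`:
`Q(x) = -x₁² - x₂² + x₃² + ⋯ + x_{q+2}²` on `ℝ^{2+q}`. -/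
def adsQ {q : ℕ} (x : Fin (q + 2) → ℝ) : ℝ :=
  ∑ i : Fin (q + 2), (if (i : ℕ) < 2 then (-1 : ℝ) else 1) * x i ^ 2

/-- The polar bilinear form of `adsQ`. -/
def adsB {q : ℕ} (x y : Fin (q + 2) → ℝ) : ℝ :=
  ∑ i : Fin (q + 2), (if (i : ℕ) < 2 then (-1 : ℝ) else 1) * x i * y i

/-- The lightlike geodesic hypersurface `H_u = u^⊥ ∩ {Q = -1}` of anti-de Sitter space,
for `u` a nonzero isotropic vector. -/
def adsH {q : ℕ} (u : Fin (q + 2) → ℝ) : Set (Fin (q + 2) → ℝ) :=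
  {x | adsQ x = -1 ∧ adsB u x = 0}

/-!
For a nondegenerate form of negative index two, `H_u` and `H_v` are disjoint exactly when no
timelike vector is orthogonal to both `u` and `v`, since a timelike vector can be rescaled to norm
`-1`. The hyperplane `u^⊥` meets a negative definite plane, so it contains a timelike vector `x`.
If `v` is collinear with `u`, then `x` is orthogonal to `v` as well; if `⟨u, v⟩ ≠ 0`, then adding a
multiple of the isotropic vector `u` makes `x` orthogonal to `v` without changing its norm.
Conversely, if `u` and `v` span a totally isotropic plane, a timelike vector orthogonal to it would
span with it a three-dimensional negative semidefinite subspace, exceeding the negative index.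
-/

open QuadraticMap Module Submodule

section CommRing

variable {R V : Type*} [CommRing R] [AddCommGroup V] [Module R V] {Q : QuadraticForm R V}
  {u v x w : V}

theorem isOrtho_of_mem_span {s : Set V} (hs : ∀ y ∈ s, Q.IsOrtho x y) (hw : w ∈ span R s) :
    Q.IsOrtho x w := by
  have span_le_ker : span R s ≤ LinearMap.ker (Q.polarBilin x) :=
    span_le.mpr fun y hy ↦ isOrtho_polarBilin.mpr (hs y hy)
  exact isOrtho_polarBilin.mp (span_le_ker hw)

theorem isOrtho_smul_right (hux : Q.IsOrtho u x) (c : R) : Q.IsOrtho u (c • x) :=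
  isOrtho_of_mem_span (s := {x}) (by simpa using hux) (smul_mem _ c (mem_span_singleton_self x))

theorem map_eq_zero_of_mem_span_pair (hu : Q u = 0) (hv : Q v = 0) (huv : Q.IsOrtho u v)
    (hw : w ∈ span R {u, v}) : Q w = 0 := by
  obtain ⟨a, b, rfl⟩ := mem_span_pair.mp hw
  have ortho : Q.IsOrtho (a • u) (b • v) :=
    isOrtho_smul_right (isOrtho_smul_right huv.symm a).symm b
  rw [isOrtho_def.mp ortho, Q.map_smul, Q.map_smul, hu, hv, smul_zero, smul_zero, add_zero]

end CommRing

section Field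

variable {𝕜 V : Type*} [Field 𝕜] [AddCommGroup V] [Module 𝕜 V] {Q : QuadraticForm 𝕜 V} {u v x : V}

theorem exists_isOrtho_isOrtho_map_eq (hu : Q u = 0) (huv : ¬Q.IsOrtho u v)
    (hux : Q.IsOrtho u x) : ∃ y, Q.IsOrtho u y ∧ Q.IsOrtho v y ∧ Q y = Q x := by
  have hvu : polar Q v u ≠ 0 := fun h ↦ huv (isOrtho_polarBilin.mp h).symm
  let c := -(polar Q v x / polar Q v u)
  have polar_u : polar Q u (x + c • u) = 0 := by
    simp [hux.polar_eq_zero, hu]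
  have polar_v : polar Q v (x + c • u) = 0 := by
    simp [c, hvu]
  have map_eq : Q (x + c • u) = Q x := by
    rw [isOrtho_def.mp (isOrtho_smul_right hux.symm c), Q.map_smul, hu, smul_zero, add_zero]
  exact ⟨x + c • u, isOrtho_polarBilin.mp polar_u, isOrtho_polarBilin.mp polar_v, map_eq⟩

end Field

section LinearOrderedField

variable {𝕜 V : Type*} [Field 𝕜] [LinearOrder 𝕜] [IsStrictOrderedRing 𝕜]
  [AddCommGroup V] [Module 𝕜 V] [FiniteDimensional 𝕜 V] {Q : QuadraticForm 𝕜 V} {u v x : V}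

theorem finrank_le_sigNeg_of_nonpos (hQ : Q.Nondegenerate) {W : Submodule 𝕜 V}
    (hW : ∀ w ∈ W, Q w ≤ 0) : finrank 𝕜 W ≤ sigNeg Q := by
  have finrank_eq := QuadraticForm.sigPos_add_sigNeg_add_radical (Q := Q)
  rw [hQ.radical_eq_bot, finrank_bot] at finrank_eq
  have finrank_le := QuadraticForm.sigPos_add_finrank_le_of_nonpos hW
  lia

theorem finrank_lt_sigNeg_of_isotropic_of_isOrtho (hQ : Q.Nondegenerate) {W : Submodule 𝕜 V}
    (hW : ∀ w ∈ W, Q w = 0) (hxW : ∀ w ∈ W, Q.IsOrtho x w) (hx : Q x < 0) :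
    finrank 𝕜 W < sigNeg Q := by
  have nonpos : ∀ y ∈ W ⊔ 𝕜 ∙ x, Q y ≤ 0 := by
    intro y hy
    obtain ⟨w, hw, z, hz, rfl⟩ := mem_sup.mp hy
    obtain ⟨c, rfl⟩ := mem_span_singleton.mp hz
    rw [isOrtho_def.mp (isOrtho_smul_right (hxW w hw).symm c), hW w hw, Q.map_smul, zero_add]
    exact mul_nonpos_of_nonneg_of_nonpos (mul_self_nonneg c) hx.le
  calc finrank 𝕜 W
    _ < finrank 𝕜 ↥(W ⊔ 𝕜 ∙ x) :=
      finrank_lt_finrank_of_lt (lt_sup_iff_notMem.mpr fun h ↦ hx.ne (hW x h))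
    _ ≤ sigNeg Q := finrank_le_sigNeg_of_nonpos hQ nonpos

theorem exists_isOrtho_map_lt_zero (hQ : 1 < sigNeg Q) (u : V) : ∃ x, Q.IsOrtho u x ∧ Q x < 0 := by
  obtain ⟨N, finrank_N, negDef_N⟩ := exists_finrank_eq_sigNeg_and_negDef Q
  have ker_ne_bot : LinearMap.ker ((Q.polarBilin u).domRestrict N) ≠ ⊥ :=
    LinearMap.ker_ne_bot_of_finrank_lt (by rwa [finrank_self, finrank_N])
  obtain ⟨x, hux, hx⟩ := exists_mem_ne_zero_of_ne_bot ker_ne_bot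
  exact ⟨x, isOrtho_polarBilin.mp hux, neg_pos.mp (negDef_N x hx)⟩

theorem exists_isOrtho_isOrtho_map_lt_zero_of_not_linearIndependent (hQ : 1 < sigNeg Q)
    (huv : ¬LinearIndependent 𝕜 ![u, v]) : ∃ x, Q.IsOrtho u x ∧ Q.IsOrtho v x ∧ Q x < 0 := by
  rcases eq_or_ne u 0 with rfl | hu
  · obtain ⟨x, hvx, hx⟩ := exists_isOrtho_map_lt_zero hQ v
    exact ⟨x, .zero_left x, hvx, hx⟩
  · obtain ⟨c, rfl⟩ : ∃ c : 𝕜, c • u = v := by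
      simpa [LinearIndependent.pair_iff' hu] using huv
    obtain ⟨x, hux, hx⟩ := exists_isOrtho_map_lt_zero hQ u
    exact ⟨x, hux, (isOrtho_smul_right hux.symm c).symm, hx⟩

theorem exists_isOrtho_isOrtho_map_lt_zero_iff (hQ : Q.Nondegenerate) (hneg : sigNeg Q = 2)
    (hu : Q u = 0) (hv : Q v = 0) :
    (∃ x, Q.IsOrtho u x ∧ Q.IsOrtho v x ∧ Q x < 0) ↔
      ¬(Q.IsOrtho u v ∧ LinearIndependent 𝕜 ![u, v]) := by
  have one_lt : 1 < sigNeg Q := by lia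
  constructor
  · rintro ⟨x, hux, hvx, hx⟩ ⟨huv, linInd⟩
    have finrank_span : finrank 𝕜 (span 𝕜 {u, v}) = 2 := by
      rw [← Matrix.range_cons_cons_empty u v ![], finrank_span_eq_card linInd, Fintype.card_fin]
    have ortho_span : ∀ w ∈ span 𝕜 {u, v}, Q.IsOrtho x w := fun w ↦
      isOrtho_of_mem_span (by simpa using ⟨hux.symm, hvx.symm⟩)
    have finrank_lt := finrank_lt_sigNeg_of_isotropic_of_isOrtho hQ
      (fun w ↦ map_eq_zero_of_mem_span_pair hu hv huv) ortho_span hx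
    lia
  · intro h
    by_cases huv : Q.IsOrtho u v
    · exact exists_isOrtho_isOrtho_map_lt_zero_of_not_linearIndependent one_lt
        fun linInd ↦ h ⟨huv, linInd⟩
    · obtain ⟨x, hux, hx⟩ := exists_isOrtho_map_lt_zero one_lt u
      obtain ⟨y, huy, hvy, hy⟩ := exists_isOrtho_isOrtho_map_eq hu huv hux
      exact ⟨y, huy, hvy, hy ▸ hx⟩

end LinearOrderedField

section Real

variable {V : Type*} [AddCommGroup V] [Module ℝ V] {Q : QuadraticForm ℝ V} {u v x : V}

/-- The hypersurface `u^⊥ ∩ {Q = -1}` for an arbitrary real quadratic form; it is lightlike when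
`u` is nonzero and isotropic. -/
def lightlikeHypersurface (Q : QuadraticForm ℝ V) (u : V) : Set V :=
  {x | Q x = -1 ∧ Q.IsOrtho u x}

theorem exists_map_smul_eq_neg_one (hx : Q x < 0) : ∃ c : ℝ, Q (c • x) = -1 := by
  have sqrt_sq : √(-Q x) * √(-Q x) = -Q x := Real.mul_self_sqrt (neg_pos.mpr hx).le
  refine ⟨(√(-Q x))⁻¹, ?_⟩
  rw [Q.map_smul, ← mul_inv, sqrt_sq, smul_eq_mul, inv_neg, neg_mul, inv_mul_cancel₀ hx.ne]

theorem disjoint_lightlikeHypersurface_iff :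
    Disjoint (lightlikeHypersurface Q u) (lightlikeHypersurface Q v) ↔
      ¬∃ x, Q.IsOrtho u x ∧ Q.IsOrtho v x ∧ Q x < 0 := by
  rw [← not_iff_not, not_not, Set.not_disjoint_iff]
  constructor
  · rintro ⟨x, ⟨hx, hux⟩, -, hvx⟩
    exact ⟨x, hux, hvx, by linarith⟩
  · rintro ⟨x, hux, hvx, hx⟩
    obtain ⟨c, hc⟩ := exists_map_smul_eq_neg_one hx
    exact ⟨c • x, ⟨hc, isOrtho_smul_right hux c⟩, hc, isOrtho_smul_right hvx c⟩

theorem ads_hypersurfaces_disjoint_iff_general [FiniteDimensional ℝ V] (hQ : Q.Nondegenerate)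
    (hneg : sigNeg Q = 2) (hu : Q u = 0) (hv : Q v = 0) :
    Disjoint (lightlikeHypersurface Q u) (lightlikeHypersurface Q v) ↔
      Q.IsOrtho u v ∧ LinearIndependent ℝ ![u, v] := by
  rw [disjoint_lightlikeHypersurface_iff,
    exists_isOrtho_isOrtho_map_lt_zero_iff hQ hneg hu hv, not_not]

end Real

section AntiDeSitter

variable {q : ℕ}

/-- The form `adsQ` as a bundled quadratic form. It is written as a weighted sum of squares so that
its radical and negative index can be read off from the weights. -/
def adsForm (q : ℕ) : QuadraticForm ℝ (Fin (q + 2) → ℝ) :=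
  weightedSumSquares ℝ fun i ↦ if (i : ℕ) < 2 then (-1 : ℝ) else 1

theorem adsForm_apply (x : Fin (q + 2) → ℝ) : adsForm q x = adsQ x := by
  simp only [adsForm, weightedSumSquares_apply, adsQ, smul_eq_mul, pow_two]

theorem polar_adsForm (x y : Fin (q + 2) → ℝ) : polar (adsForm q) x y = 2 * adsB x y := by
  simp only [polar, adsForm_apply, adsQ, adsB, Pi.add_apply, Finset.mul_sum,
    ← Finset.sum_sub_distrib]
  exact Finset.sum_congr rfl fun i _ ↦ by ring

theorem isOrtho_adsForm_iff {x y : Fin (q + 2) → ℝ} :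
    (adsForm q).IsOrtho x y ↔ adsB x y = 0 := by
  rw [← isOrtho_polarBilin, polarBilin_apply_apply, polar_adsForm,
    mul_eq_zero_iff_left two_ne_zero]

theorem lightlikeHypersurface_adsForm (u : Fin (q + 2) → ℝ) :
    lightlikeHypersurface (adsForm q) u = adsH u := by
  simp only [lightlikeHypersurface, adsH, adsForm_apply, isOrtho_adsForm_iff]

theorem nondegenerate_adsForm : (adsForm q).Nondegenerate := by
  have weight_ne_zero (i : Fin (q + 2)) : (if (i : ℕ) < 2 then (-1 : ℝ) else 1) ≠ 0 := by
    split_ifs <;> norm_num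
  rw [nondegenerate_iff_radical_eq_bot, adsForm, QuadraticForm.radical_weightedSumSquares,
    Submodule.eq_bot_iff]
  exact fun x hx ↦ funext fun i ↦ Pi.mem_spanSubset_iff.mp hx i (weight_ne_zero i)

theorem sigNeg_adsForm : sigNeg (adsForm q) = 2 := by
  have negative_indices :
      {i : Fin (q + 2) | (if (i : ℕ) < 2 then (-1 : ℝ) else 1) < 0} = {0, 1} := by
    ext i
    have weight_neg_iff : (if (i : ℕ) < 2 then (-1 : ℝ) else 1) < 0 ↔ (i : ℕ) < 2 := by
      split_ifs with hi <;> simp [hi]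
    simp only [Set.mem_ofPred_eq, weight_neg_iff, Set.mem_insert_iff, Set.mem_singleton_iff,
      Fin.ext_iff, Fin.val_zero, Fin.val_one]
    lia
  rw [adsForm, QuadraticForm.sigNeg_weightedSumSquares, negative_indices,
    Set.ncard_pair Fin.zero_ne_one]

end AntiDeSitter

/-- Two lightlike hypersurfaces `H_u` and `H_v` of anti-de Sitter space are disjoint
if and only if `u` and `v` are orthogonal but not collinear. -/
theorem ads_hypersurfaces_disjoint_iff {q : ℕ} (hq : 2 ≤ q)
    (u v : Fin (q + 2) → ℝ) (hu : u ≠ 0) (hv : v ≠ 0)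
    (hqu : adsQ u = 0) (hqv : adsQ v = 0) :
    adsH u ∩ adsH v = ∅ ↔ (adsB u v = 0 ∧ ¬ ∃ c : ℝ, v = c • u) := by
  rw [← adsForm_apply] at hqu hqv
  simpa only [lightlikeHypersurface_adsForm, Set.disjoint_iff_inter_eq_empty, isOrtho_adsForm_iff,
    LinearIndependent.pair_iff' hu, ne_eq, ← not_exists, eq_comm (b := v)] using
    ads_hypersurfaces_disjoint_iff_general nondegenerate_adsForm sigNeg_adsForm hqu hqv
end

section
/- Let A be a linear map of ℝ^d preserving the standard Lorentz form q, and suppose A has three pairwise linearly independent nonzero isotropic eigenvectors X₁, X₂, X₃, with A Xᵢ = λᵢ Xᵢ. Then λ₁ = λ₂ = λ₃ and this common value is 1 or −1; in particular A acts as ± Identity on the linear span of X₁, X₂, X₃. -/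
/-!
An isometry `f` with `f x = a • x` and `f y = b • y` preserves the polar form, so
`a * b = 1` as soon as `x` and `y` are not orthogonal. Three pairwise non-orthogonal
eigenvectors thus give `ab = ac = bc = 1`, which forces `a = b = c = ±1`.
Independent isotropic vectors of the Lorentz form are never orthogonal: otherwise their
span would be totally isotropic, yet it contains a nonzero vector whose first coordinate
vanishes, and the form is positive definite on such vectors.
-/

section QuadraticMap

open QuadraticMap

variable {R M N : Type*} [CommRing R] [AddCommGroup M] [Module R M] [AddCommGroup N] [Module R N]

theorem mul_eq_one_of_map_eq_smul_of_polar_ne_zero [IsDomain R] [Module.IsTorsionFree R N]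
    {Q : QuadraticMap R M N} {f : M →ₗ[R] M} (hf : ∀ x, Q (f x) = Q x) {x y : M} {a b : R}
    (hx : f x = a • x) (hy : f y = b • y) (hxy : polar Q x y ≠ 0) : a * b = 1 := by
  have polar_map : polar Q (f x) (f y) = polar Q x y := by
    simp only [polar, ← map_add, hf]
  rw [hx, hy, polar_smul_left, polar_smul_right, smul_smul] at polar_map
  exact smul_left_injective R hxy (polar_map.trans (one_smul R _).symm)

theorem lorentz_three_isotropic_eigenvectors_general [IsDomain R] [Module.IsTorsionFree R N]
    {Q : QuadraticMap R M N} {f : M →ₗ[R] M} (hf : ∀ x, Q (f x) = Q x) {X : Fin 3 → M}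
    {lam : Fin 3 → R} (heig : ∀ i, f (X i) = lam i • X i)
    (hpolar : ∀ i j, i ≠ j → polar Q (X i) (X j) ≠ 0) :
    lam 0 = lam 1 ∧ lam 1 = lam 2 ∧ (lam 0 = 1 ∨ lam 0 = -1) ∧
      ∀ w ∈ Submodule.span R (Set.range X), f w = lam 0 • w := by
  have mul_eq_one {i j : Fin 3} (hij : i ≠ j) : lam i * lam j = 1 :=
    mul_eq_one_of_map_eq_smul_of_polar_ne_zero hf (heig i) (heig j) (hpolar i j hij)
  have h01 : lam 0 = lam 1 :=
    left_inv_eq_right_inv (mul_eq_one (by decide : (0 : Fin 3) ≠ 2)) (mul_eq_one (by decide))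
  have h12 : lam 1 = lam 2 :=
    left_inv_eq_right_inv (mul_eq_one (by decide : (1 : Fin 3) ≠ 0)) (mul_eq_one (by decide))
  have sq_eq_one : lam 0 * lam 0 = 1 := by
    simpa only [← h01] using mul_eq_one (by decide : (0 : Fin 3) ≠ 1)
  have eqOn_range : Set.EqOn f (lam 0 • LinearMap.id : M →ₗ[R] M) (Set.range X) := by
    rintro _ ⟨i, rfl⟩
    fin_cases i <;> simp [heig, h01, h12]
  exact ⟨h01, h12, mul_self_eq_one_iff.1 sq_eq_one, LinearMap.eqOn_span eqOn_range⟩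

theorem polar_ne_zero_of_anisotropic_on_ker [Nontrivial R] {Q : QuadraticMap R M N}
    {ℓ : M →ₗ[R] R} (hQ : ∀ z, ℓ z = 0 → Q z = 0 → z = 0) {x y : M} (hx : Q x = 0) (hy : Q y = 0)
    (hxy : LinearIndependent R ![x, y]) : polar Q x y ≠ 0 := by
  intro orthogonal
  have combination_eq_zero : ℓ y • x + (-ℓ x) • y = 0 := by
    apply hQ
    · simp [mul_comm]
    · rw [QuadraticMap.map_add Q, QuadraticMap.map_smul, QuadraticMap.map_smul, polar_smul_left,
        polar_smul_right, hx, hy, orthogonal]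
      simp only [smul_zero, add_zero]
  have hℓx : ℓ x = 0 := neg_eq_zero.1 (LinearIndependent.pair_iff.1 hxy _ _ combination_eq_zero).2
  exact hxy.ne_zero 0 (hQ x hℓx hx)

end QuadraticMap

/-- The Lorentz form `lorentzQ` as a bundled quadratic form, which gives access to its polar
form. -/
noncomputable def lorentzForm (d : ℕ) : QuadraticForm ℝ (Fin d → ℝ) :=
  QuadraticMap.weightedSumSquares ℝ fun i : Fin d => if (i : ℕ) = 0 then (-1 : ℝ) else 1

theorem lorentzForm_apply {d : ℕ} (x : Fin d → ℝ) : lorentzForm d x = lorentzQ x := by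
  simp only [lorentzForm, lorentzQ, QuadraticMap.weightedSumSquares_apply, smul_eq_mul, sq]

theorem lorentzQ_succ {n : ℕ} (x : Fin (n + 1) → ℝ) :
    lorentzQ x = -x 0 ^ 2 + ∑ i : Fin n, x i.succ ^ 2 := by
  simp [lorentzQ, Fin.sum_univ_succ]

theorem eq_zero_of_lorentzQ_eq_zero {n : ℕ} {x : Fin (n + 1) → ℝ} (hx₀ : x 0 = 0)
    (hx : lorentzQ x = 0) : x = 0 := by
  have sum_sq_eq_zero : ∑ i : Fin n, x i.succ ^ 2 = 0 := by
    simpa [lorentzQ_succ, hx₀] using hx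
  rw [Fintype.sum_eq_zero_iff_of_nonneg fun i => sq_nonneg (x i.succ)] at sum_sq_eq_zero
  ext i
  cases i using Fin.cases with
  | zero => exact hx₀
  | succ j => exact sq_eq_zero_iff.1 (congrFun sum_sq_eq_zero j)

theorem polar_lorentzForm_ne_zero {d : ℕ} {x y : Fin d → ℝ} (hx : lorentzQ x = 0)
    (hy : lorentzQ y = 0) (hxy : LinearIndependent ℝ ![x, y]) :
    QuadraticMap.polar (lorentzForm d) x y ≠ 0 := by
  cases d with
  | zero => exact absurd (Subsingleton.elim x 0) (hxy.ne_zero 0)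
  | succ n =>
    simp only [← lorentzForm_apply] at hx hy
    have anisotropic (z : Fin (n + 1) → ℝ) (hz₀ : LinearMap.proj (R := ℝ) 0 z = 0)
        (hz : lorentzForm (n + 1) z = 0) : z = 0 :=
      eq_zero_of_lorentzQ_eq_zero hz₀ (lorentzForm_apply z ▸ hz)
    exact polar_ne_zero_of_anisotropic_on_ker anisotropic hx hy hxy

/-- If a Lorentz transformation has three pairwise linearly independent nonzero
isotropic eigenvectors, then all three eigenvalues are equal to `1` or to `-1`, and
the transformation is `± Identity` on the span of the eigenvectors. -/
theorem lorentz_three_isotropic_eigenvectors {d : ℕ}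
    (A : Matrix (Fin d) (Fin d) ℝ)
    (hA : ∀ x : Fin d → ℝ, lorentzQ (A.mulVec x) = lorentzQ x)
    (X : Fin 3 → (Fin d → ℝ)) (lam : Fin 3 → ℝ)
    (hX : ∀ i, X i ≠ 0) (hq : ∀ i, lorentzQ (X i) = 0)
    (hpair : ∀ i j, i ≠ j → LinearIndependent ℝ ![X i, X j])
    (heig : ∀ i, A.mulVec (X i) = lam i • X i) :
    lam 0 = lam 1 ∧ lam 1 = lam 2 ∧ (lam 0 = 1 ∨ lam 0 = -1) ∧
      ∀ w ∈ Submodule.span ℝ (Set.range X), A.mulVec w = lam 0 • w := by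
  have hf (x : Fin d → ℝ) : lorentzForm d (A.mulVecLin x) = lorentzForm d x := by
    simpa only [lorentzForm_apply, Matrix.mulVecLin_apply] using hA x
  exact lorentz_three_isotropic_eigenvectors_general hf heig fun i j hij =>
    polar_lorentzForm_ne_zero (hq i) (hq j) (hpair i j hij)
end
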